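/- Let 𝑇 be a compact metric space and let 𝓜(𝑇) be the space of finite signed Borel measures on 𝑇, with |μ| denoting the total variation measure of μ. Then: (i) for every μ ∈ 𝓜(𝑇) and every open set U ⊆ 𝑇, |μ|(U) = sup{ ∫ f dμ : f ∈ C(𝑇), |f| ≤ 1_U }; (ii) consequently, for every f ∈ C(𝑇) the map 𝓜(𝑇) ∋ μ ↦ ∫ f d|μ| is measurable with respect to the σ-algebra on 𝓜(𝑇) generated by the evaluation maps μ ↦ ∫ g dμ, g ∈ C(𝑇); that is, the total variation map μ ↦ |μ| is weak-star measurable. -/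

import Mathlib

/-!
For finite measures on a metric space, measurable sets are approximated from inside by closed sets.
Splitting `U` along a Hahn set of `μ` and choosing closed subsets `K`, `L` of the two pieces that
almost exhaust `μ⁺` and `μ⁻` on `U`, Urysohn's lemma yields a continuous `f` with `|f| ≤ 1_U`,
`f = 1` on `K` and `f = -1` on `L`, so that `∫ f dμ` is close to `|μ|(U)`; the reverse inequality
is the triangle inequality (`isLUB_sint`).

Since `C(T)` is separable and `f ↦ ∫ f dμ` is continuous, the supremum may be taken over a
countable set of tests independent of `μ`. Hence `μ ↦ |μ|(U)` is measurable for open `U`, and, the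
open sets being a π-system generating the Borel sets, `μ ↦ |μ|` is measurable into the space of
measures (`measurable_totalVariation`). Integrals of continuous functions against `|μ|` are then
measurable as differences of two Lebesgue integrals.
-/

open MeasureTheory

noncomputable section

/-- The signed integral of `f` against a signed measure. -/
def sint {α : Type*} [MeasurableSpace α] (μ : SignedMeasure α) (f : α → ℝ) : ℝ :=
  ∫ x, f x ∂μ.toJordanDecomposition.posPart - ∫ x, f x ∂μ.toJordanDecomposition.negPart

/-- The continuous functions `f` with `|f| ≤ 1_U`. -/
def unitTests {T : Type*} [TopologicalSpace T] (U : Set T) : Set C(T, ℝ) :=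
  {f | ∀ x, |f x| ≤ U.indicator (fun _ => (1 : ℝ)) x}

/-- Urysohn: two disjoint closed subsets of `U` are separated by a test function that is
`1` on the first and `-1` on the second. -/
lemma exists_mem_unitTests_separating {T : Type*} [MetricSpace T] {U K L : Set T}
    (hU : IsOpen U) (hK : IsClosed K) (hL : IsClosed L) (hKU : K ⊆ U) (hLU : L ⊆ U) (hKL : Disjoint K L) :
    ∃ f ∈ unitTests U, (∀ x ∈ K, f x = 1) ∧ ∀ x ∈ L, f x = -1 := by
  have dK : Disjoint (Uᶜ ∪ L) K :=
    Set.disjoint_union_left.2 ⟨(Set.disjoint_compl_left_iff_subset.2 hKU), hKL.symm⟩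
  have dL : Disjoint (Uᶜ ∪ K) L :=
    Set.disjoint_union_left.2 ⟨(Set.disjoint_compl_left_iff_subset.2 hLU), hKL⟩
  obtain ⟨f, f0, f1, fI⟩ :=
    exists_continuous_zero_one_of_isClosed (hU.isClosed_compl.union hL) hK dK
  obtain ⟨g, g0, g1, gI⟩ :=
    exists_continuous_zero_one_of_isClosed (hU.isClosed_compl.union hK) hL dL
  refine ⟨f - g, fun x => ?_, fun x hx => ?_, fun x hx => ?_⟩
  · by_cases hx : x ∈ U
    · have a := fI x
      have b := gI x
      simp only [Set.indicator_of_mem hx, ContinuousMap.sub_apply, abs_le]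
      constructor <;> linarith [a.1, a.2, b.1, b.2]
    · have a : f x = 0 := f0 (Or.inl hx)
      have b : g x = 0 := g0 (Or.inl hx)
      simp [hx, a, b]
  · have a : f x = 1 := f1 hx
    have b : g x = 0 := g0 (Or.inr hx)
    simp [a, b]
  · have a : f x = 0 := f0 (Or.inr hx)
    have b : g x = 1 := g1 hx
    simp [a, b]

lemma totalVariation_real {T : Type*} [MeasurableSpace T] (μ : SignedMeasure T)
    (U : Set T) :
    μ.totalVariation.real U
      = μ.toJordanDecomposition.posPart.real U + μ.toJordanDecomposition.negPart.real U := by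
  simp [SignedMeasure.totalVariation, measureReal_def, ENNReal.toReal_add]

section

variable {T : Type*} [MetricSpace T] [CompactSpace T] [MeasurableSpace T] [BorelSpace T]

lemma integrable_continuousMap (m : Measure T) [IsFiniteMeasure m] (f : C(T, ℝ)) :
    Integrable f m :=
  f.continuous.integrable_of_hasCompactSupport (HasCompactSupport.of_compactSpace f)

lemma abs_integral_le_of_mem_unitTests (m : Measure T) [IsFiniteMeasure m] {U : Set T}
    (hU : IsOpen U) {f : C(T, ℝ)} (hf : f ∈ unitTests U) : |∫ x, f x ∂m| ≤ m.real U := by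
  calc |∫ x, f x ∂m| ≤ ∫ x, |f x| ∂m := abs_integral_le_integral_abs
    _ ≤ ∫ x, U.indicator (fun _ => (1 : ℝ)) x ∂m :=
        integral_mono (integrable_continuousMap m f).abs
          ((integrable_const _).indicator hU.measurableSet) hf
    _ = m.real U := integral_indicator_one hU.measurableSet

/-- A test function equal to `1` on `K` satisfies `f ≥ 2 · 1_K - 1_U`, hence the bound. -/
lemma le_integral_of_eq_one_on (m : Measure T) [IsFiniteMeasure m] {U K : Set T}
    (hU : IsOpen U) (hK : IsClosed K) {f : C(T, ℝ)} (hf : f ∈ unitTests U)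
    (h1 : ∀ x ∈ K, f x = 1) : 2 * m.real K - m.real U ≤ ∫ x, f x ∂m := by
  have iU : Integrable (U.indicator (fun _ => (1 : ℝ))) m :=
    (integrable_const _).indicator hU.measurableSet
  have iK : Integrable (K.indicator (fun _ => (1 : ℝ))) m :=
    (integrable_const _).indicator hK.measurableSet
  have e : 2 * m.real K - m.real U
      = ∫ x, (2 * K.indicator (fun _ => (1 : ℝ)) x - U.indicator (fun _ => (1 : ℝ)) x) ∂m := by
    rw [integral_sub (iK.const_mul 2) iU, integral_const_mul]
    congr 2
    · exact (integral_indicator_one hK.measurableSet).symm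
    · exact (integral_indicator_one hU.measurableSet).symm
  rw [e]
  refine integral_mono ((iK.const_mul 2).sub iU) (integrable_continuousMap m f) fun x => ?_
  have hx := abs_le.1 (hf x)
  by_cases hxK : x ∈ K
  · have := h1 x hxK
    simp only [Set.indicator_of_mem hxK]
    linarith [hx.2]
  · simp only [Set.indicator_of_notMem hxK]
    linarith [hx.1]

/-- A finite measure `m` vanishing on `N` is approximated on `U` by closed subsets of `U \ N`. -/
lemma exists_isClosed_subset_sdiff (m : Measure T) [IsFiniteMeasure m] {U N : Set T}
    (hU : IsOpen U) (hN : MeasurableSet N) (h0 : m N = 0) {ε : ℝ} (hε : 0 < ε) :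
    ∃ K ⊆ U \ N, IsClosed K ∧ m.real U ≤ m.real K + ε := by
  obtain ⟨K, hK, hKc, hlt⟩ := (hU.measurableSet.diff hN).exists_isClosed_sdiff_lt
    (μ := m) (measure_ne_top _ _) (ENNReal.ofReal_pos.2 hε).ne'
  refine ⟨K, hK, hKc, ?_⟩
  have e : m.real U = m.real (U \ N) := by
    simp only [measureReal_def, measure_sdiff_null h0]
  have h2 : m.real ((U \ N) \ K) ≤ ε := ENNReal.toReal_le_of_le_ofReal hε.le hlt.le
  have h3 := measureReal_union_le (μ := m) K ((U \ N) \ K)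
  rw [Set.union_sdiff_cancel hK] at h3
  linarith

/-- The variational formula for `|μ|(U)`. With `S` a Hahn set, closed sets `K ⊆ U \ S` and
`L ⊆ U ∩ S` nearly exhausting the positive and the negative part give near-optimal tests. -/
lemma isLUB_sint (μ : SignedMeasure T) {U : Set T} (hU : IsOpen U) :
    IsLUB ((fun f : C(T, ℝ) => sint μ f) '' unitTests U) (μ.totalVariation.real U) := by
  rw [totalVariation_real]
  constructor
  · rintro _ ⟨f, hf, rfl⟩
    have a := abs_le.1
      (abs_integral_le_of_mem_unitTests μ.toJordanDecomposition.posPart hU hf)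
    have b := abs_le.1
      (abs_integral_le_of_mem_unitTests μ.toJordanDecomposition.negPart hU hf)
    simp only [sint]
    linarith [a.2, b.1]
  · intro b hb
    refine le_of_forall_pos_le_add fun ε hε => ?_
    obtain ⟨S, hS, hp, hn⟩ := μ.toJordanDecomposition.mutuallySingular
    obtain ⟨K, hK, hKc, hKm⟩ := exists_isClosed_subset_sdiff
      μ.toJordanDecomposition.posPart hU hS hp (show 0 < ε / 4 by positivity)
    obtain ⟨L, hL, hLc, hLm⟩ := exists_isClosed_subset_sdiff
      μ.toJordanDecomposition.negPart hU hS.compl hn (show 0 < ε / 4 by positivity)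
    have hKL : Disjoint K L := Set.disjoint_left.2 fun x hx hx' => (hL hx').2 (hK hx).2
    obtain ⟨f, hf, f1, f2⟩ := exists_mem_unitTests_separating hU hKc hLc
      (hK.trans Set.sdiff_subset) (hL.trans Set.sdiff_subset) hKL
    have hp' := le_integral_of_eq_one_on μ.toJordanDecomposition.posPart hU hKc hf f1
    have hn' := le_integral_of_eq_one_on μ.toJordanDecomposition.negPart hU hLc (f := -f)
      (fun x => by simpa using hf x) (fun x hx => by simp [f2 x hx])
    simp only [ContinuousMap.neg_apply, integral_neg] at hn'
    have := hb ⟨f, hf, rfl⟩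
    simp only [sint] at this
    linarith

lemma continuous_sint (μ : SignedMeasure T) : Continuous fun f : C(T, ℝ) => sint μ f := by
  have key (m : Measure T) [IsFiniteMeasure m] : Continuous fun f : C(T, ℝ) => ∫ x, f x ∂m := by
    refine (LipschitzWith.of_dist_le_mul (K := (m Set.univ).toNNReal) fun f g => ?_).continuous
    rw [Real.dist_eq, ← integral_sub (integrable_continuousMap m f) (integrable_continuousMap m g),
      mul_comm]
    have hfg : ∀ᵐ x ∂m, ‖f x - g x‖ ≤ dist f g :=
      .of_forall fun x => (dist_eq_norm (f x) (g x)).ge.trans (ContinuousMap.dist_apply_le_dist x)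
    exact norm_integral_le_of_norm_le_const hfg
  exact (key _).sub (key _)

/-- Separability of `C(T)` makes the supremum in the variational formula a countable one. -/
lemma measurable_totalVariation {Ω : Type*} [MeasurableSpace Ω] (M : Ω → SignedMeasure T)
    (hM : ∀ g : C(T, ℝ), Measurable fun ω => sint (M ω) g) :
    Measurable fun ω => (M ω).totalVariation := by
  have hfin (ω : Ω) : IsFiniteMeasure (M ω).totalVariation := by
    unfold SignedMeasure.totalVariation
    infer_instance
  have hopen (U : Set T) (hU : IsOpen U) : Measurable fun ω => (M ω).totalVariation U := by
    obtain ⟨D, hD, hDc, hDd⟩ := (TopologicalSpace.IsSeparable.of_separableSpace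
      (unitTests U)).exists_countable_dense_subset
    have : Countable D := hDc.to_subtype
    have hreal : Measurable fun ω => (M ω).totalVariation.real U := by
      refine Measurable.isLUB (f := fun (g : D) ω => sint (M ω) g.1) (fun g => hM g.1)
        fun ω => ⟨?_, fun b hb => ?_⟩
      · rintro _ ⟨g, rfl⟩
        exact (isLUB_sint (M ω) hU).1 ⟨g.1, hD g.2, rfl⟩
      · refine (isLUB_sint (M ω) hU).2 ?_
        rintro _ ⟨g, hg, rfl⟩
        have hcl : IsClosed {g : C(T, ℝ) | sint (M ω) g ≤ b} :=
          isClosed_le (continuous_sint _) continuous_const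
        exact closure_minimal (fun g hg => hb ⟨⟨g, hg⟩, rfl⟩) hcl (hDd hg)
    simpa [measureReal_def] using hreal.ennreal_ofReal
  exact Measurable.measure_of_isPiSystem (S := {U | IsOpen U}) (BorelSpace.measurable_eq)
    isPiSystem_isOpen hopen (hopen _ isOpen_univ)

lemma measurable_integral_totalVariation {Ω : Type*} [MeasurableSpace Ω]
    (M : Ω → SignedMeasure T) (hM : ∀ g : C(T, ℝ), Measurable fun ω => sint (M ω) g)
    (f : C(T, ℝ)) : Measurable fun ω => ∫ x, f x ∂(M ω).totalVariation := by
  have hfin (ω : Ω) : IsFiniteMeasure (M ω).totalVariation := by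
    unfold SignedMeasure.totalVariation
    infer_instance
  have hf : Measurable f := f.continuous.measurable
  have hT := measurable_totalVariation M hM
  simp_rw [fun ω => integral_eq_lintegral_pos_part_sub_lintegral_neg_part
    (integrable_continuousMap (M ω).totalVariation f)]
  exact (((Measure.measurable_lintegral hf.ennreal_ofReal).comp hT).ennreal_toReal).sub
    (((Measure.measurable_lintegral hf.neg.ennreal_ofReal).comp hT).ennreal_toReal)

end

/-- Let `𝑇` be a compact metric space.
(i) For every finite signed Borel measure `μ` on `𝑇` and every open `U ⊆ 𝑇`,
`|μ|(U) = sup { ∫ f dμ : f ∈ C(𝑇), |f| ≤ 1_U }`.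
(ii) Consequently, for every `f ∈ C(𝑇)` the map `μ ↦ ∫ f d|μ|` is measurable with
respect to the σ-algebra on `𝓜(𝑇)` generated by the evaluations `μ ↦ ∫ g dμ`,
`g ∈ C(𝑇)`; i.e. the total variation map `μ ↦ |μ|` is weak-star measurable. -/
theorem totalVariation_weakStar_measurable
    (T : Type*) [MetricSpace T] [CompactSpace T] [MeasurableSpace T] [BorelSpace T] :
    (∀ (μ : SignedMeasure T) (U : Set T), IsOpen U →
      (μ.totalVariation U).toReal =
        sSup {y : ℝ | ∃ f : C(T, ℝ),
          (∀ x, |f x| ≤ U.indicator (fun _ => (1 : ℝ)) x) ∧ y = sint μ f}) ∧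
    (∀ f : C(T, ℝ),
      @Measurable (SignedMeasure T) ℝ
        (⨆ g : C(T, ℝ),
          MeasurableSpace.comap (fun μ : SignedMeasure T => sint μ g) (borel ℝ))
        (borel ℝ)
        (fun μ : SignedMeasure T => ∫ x, f x ∂μ.totalVariation)) := by
  refine ⟨fun μ U hU => ?_, fun f => ?_⟩
  · have hne : ((fun f : C(T, ℝ) => sint μ f) '' unitTests U).Nonempty :=
      ⟨_, 0, fun x => by simpa using Set.indicator_nonneg (fun _ _ => zero_le_one) x, rfl⟩
    refine ((isLUB_sint μ hU).csSup_eq hne).symm.trans (congrArg sSup ?_)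
    ext y
    exact exists_congr fun f => and_congr_right fun _ => eq_comm
  · let m : MeasurableSpace (SignedMeasure T) := ⨆ g : C(T, ℝ),
      MeasurableSpace.comap (fun μ : SignedMeasure T => sint μ g) (borel ℝ)
    refine @measurable_integral_totalVariation T _ _ _ _ (SignedMeasure T) m id (fun g => ?_) f
    exact Measurable.mono (comap_measurable _) (le_iSup (fun g : C(T, ℝ) =>
      MeasurableSpace.comap (fun μ : SignedMeasure T => sint μ g) (borel ℝ)) g) le_rfl
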